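/- arXiv:math/0503193 — 2 statements merged into one kernel-verified Lean document; each statement's English description precedes it below -/
import Mathlib

section
/- Let V be a finite-dimensional real vector space of dimension at least 4, and let ω₁ and ω₂ be linear symplectic forms on V such that every complex structure compatible with ω₁ is tamed by ω₂. Then for every pair of linearly independent vectors v, w ∈ V one has ω₁(v, w) > 0 if and only if ω₂(v, w) > 0. -/
/-- A linear symplectic form: an alternating, nondegenerate bilinear form. -/
def IsSymplecticForm {V : Type*} [AddCommGroup V] [Module ℝ V]
    (ω : V →ₗ[ℝ] V →ₗ[ℝ] ℝ) : Prop :=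
  (∀ v, ω v v = 0) ∧ ∀ v, v ≠ 0 → ∃ w, ω v w ≠ 0

/-- A complex structure: a linear endomorphism with `J ∘ J = -id`. -/
def IsComplexStructure {V : Type*} [AddCommGroup V] [Module ℝ V]
    (J : V →ₗ[ℝ] V) : Prop :=
  ∀ v, J (J v) = -v

/-- `J` is tamed by `ω` if `ω(v, J v) > 0` for all `v ≠ 0`. -/
def Tames {V : Type*} [AddCommGroup V] [Module ℝ V]
    (ω : V →ₗ[ℝ] V →ₗ[ℝ] ℝ) (J : V →ₗ[ℝ] V) : Prop :=
  ∀ v, v ≠ 0 → 0 < ω v (J v)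

/-- `J` is compatible with `ω`: tamed by `ω` and `ω(Ju, Jv) = ω(u, v)`. -/
def CompatibleWith {V : Type*} [AddCommGroup V] [Module ℝ V]
    (ω : V →ₗ[ℝ] V →ₗ[ℝ] ℝ) (J : V →ₗ[ℝ] V) : Prop :=
  (∀ v, v ≠ 0 → 0 < ω v (J v)) ∧ ∀ u v, ω (J u) (J v) = ω u v

/-! A compatible complex structure `J` of `ω₁` can be found with `J v` any prescribed vector `x`
satisfying `ω₁ v x > 0`: rotate the symplectic plane spanned by `v` and `x`, and add an arbitrary
compatible complex structure on its `ω₁`-orthogonal complement. Taming then gives `ω₂ v x > 0`, so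
the open half-space `ω₁ v > 0` lies in the half-space `ω₂ v > 0`, and an inclusion between open
half-spaces through the origin is an equality. -/

open Module Submodule
open LinearMap (BilinForm)

theorem exists_pos_of_linearMap_ne_zero {R M : Type*} [Ring R] [LinearOrder R]
    [IsOrderedAddMonoid R] [AddCommGroup M] [Module R M] {f : M →ₗ[R] R} (hf : f ≠ 0) :
    ∃ x, 0 < f x := by
  obtain ⟨x, hx⟩ := DFunLike.ne_iff.mp hf
  obtain hx | hx := lt_or_gt_of_ne hx
  · exact ⟨-x, by simpa using hx⟩
  · exact ⟨x, hx⟩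

theorem pos_iff_pos_of_forall_pos_imp_pos {R M : Type*} [CommRing R] [LinearOrder R]
    [IsStrictOrderedRing R] [AddCommGroup M] [Module R M] {f g : M →ₗ[R] R} (hf : f ≠ 0)
    (hfg : ∀ x, 0 < f x → 0 < g x) (x : M) : 0 < f x ↔ 0 < g x := by
  refine ⟨hfg x, fun hgx => ?_⟩
  by_contra! hfx
  obtain ⟨u, hfu⟩ := exists_pos_of_linearMap_ne_zero hf
  have hf_pos : 0 < f (g x • u - g u • x) := by
    have hgu := hfg u hfu
    simp only [map_sub, map_smul, smul_eq_mul]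
    linarith [mul_pos hgx hfu, mul_nonpos_of_nonneg_of_nonpos hgu.le hfx]
  have hg_zero : g (g x • u - g u • x) = 0 := by simp [mul_comm]
  exact (hfg _ hf_pos).ne' hg_zero

section DirectSum

variable {R M : Type*} [Ring R] [AddCommGroup M] [Module R M] {p q : Submodule R M}

/-- The direct sum of endomorphisms of two complementary submodules, as an endomorphism of the
ambient module. -/
noncomputable def directSumEnd (h : IsCompl p q) (f : p →ₗ[R] p) (g : q →ₗ[R] q) : M →ₗ[R] M :=
  LinearMap.ofIsCompl h (p.subtype ∘ₗ f) (q.subtype ∘ₗ g)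

theorem directSumEnd_apply_left (h : IsCompl p q) (f : p →ₗ[R] p) (g : q →ₗ[R] q) (x : p) :
    directSumEnd h f g x = f x := by
  simp [directSumEnd]

theorem directSumEnd_apply_add (h : IsCompl p q) (f : p →ₗ[R] p) (g : q →ₗ[R] q) (x : p) (y : q) :
    directSumEnd h f g (x + y) = f x + g y := by
  simp [directSumEnd]

end DirectSum

section QuarterTurn

variable {R M : Type*} [Ring R] [AddCommGroup M] [Module R M]

/-- The rotation by a quarter turn `b 0 ↦ b 1 ↦ -b 0` of a plane with basis `b`: the standard
complex structure in these coordinates. -/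
noncomputable def quarterTurn (b : Basis (Fin 2) R M) : M →ₗ[R] M :=
  b.constr ℕ ![b 1, -b 0]

@[simp]
theorem quarterTurn_apply_zero (b : Basis (Fin 2) R M) : quarterTurn b (b 0) = b 1 := by
  simp [quarterTurn]

@[simp]
theorem quarterTurn_apply_one (b : Basis (Fin 2) R M) : quarterTurn b (b 1) = -b 0 := by
  simp [quarterTurn]

end QuarterTurn

section AlternatingForm

variable {R M : Type*} [CommRing R] [AddCommGroup M] [Module R M] {B : BilinForm R M}

theorem isAlt_restrict (hB : B.IsAlt) (p : Submodule R M) : (B.restrict p).IsAlt := fun x => hB x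

theorem linearIndependent_pair_of_apply_ne_zero [NoZeroDivisors R] {v w : M} (hB : B.IsAlt)
    (hvw : B v w ≠ 0) : LinearIndependent R ![v, w] := by
  refine LinearIndependent.pair_iff.mpr fun s t hst => ⟨?_, ?_⟩
  · simpa [hB.self_eq_zero, hvw] using congrArg (B · w) hst
  · simpa [hB.self_eq_zero, hvw] using congrArg (B v) hst

end AlternatingForm

section Symplectic

variable {V : Type*} [AddCommGroup V] [Module ℝ V] {ω : BilinForm ℝ V} {p q : Submodule ℝ V}

theorem IsSymplecticForm.isAlt (hω : IsSymplecticForm ω) : ω.IsAlt := hω.1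

theorem IsSymplecticForm.apply_ne_zero (hω : IsSymplecticForm ω) {v : V} (hv : v ≠ 0) :
    ω v ≠ 0 := by
  obtain ⟨w, hw⟩ := hω.2 v hv
  exact fun h => hw (by simp [h])

theorem isSymplecticForm_iff_ker_eq_bot :
    IsSymplecticForm ω ↔ ω.IsAlt ∧ LinearMap.ker ω = ⊥ := by
  refine and_congr_right fun _ => ?_
  simp only [LinearMap.ker_eq_bot', LinearMap.ext_iff, LinearMap.zero_apply]
  exact forall_congr' fun v => by rw [← not_forall, not_imp_not]

theorem IsSymplecticForm.nondegenerate (hω : IsSymplecticForm ω) : ω.Nondegenerate :=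
  hω.isAlt.isRefl.nondegenerate_iff_separatingLeft.mpr <|
    LinearMap.separatingLeft_iff_ker_eq_bot.mpr (isSymplecticForm_iff_ker_eq_bot.mp hω).2

theorem IsSymplecticForm.restrict_orthogonal (hω : IsSymplecticForm ω)
    (hp : Codisjoint p (ω.orthogonal p)) : IsSymplecticForm (ω.restrict (ω.orthogonal p)) := by
  rw [isSymplecticForm_iff_ker_eq_bot] at hω ⊢
  refine ⟨isAlt_restrict hω.1 _, ?_⟩
  rw [BilinForm.ker_restrict_eq_of_codisjoint hp.symm fun x hx y hy => hω.1.isRefl y x (hx y hy),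
    hω.2, comap_bot, ker_subtype]

theorem isSymplecticForm_of_tames {J : V →ₗ[ℝ] V} (hω : ω.IsAlt) (hJ : Tames ω J) :
    IsSymplecticForm ω :=
  ⟨hω, fun v hv => ⟨J v, (hJ v hv).ne'⟩⟩

theorem isCompl_orthogonal_of_tames [FiniteDimensional ℝ V] {J : p →ₗ[ℝ] p} (hω : ω.IsAlt)
    (hJ : Tames (ω.restrict p) J) : IsCompl p (ω.orthogonal p) :=
  have hp : IsSymplecticForm (ω.restrict p) := isSymplecticForm_of_tames (isAlt_restrict hω p) hJ
  BilinForm.isCompl_orthogonal_of_restrict_nondegenerate hω.isRefl hp.nondegenerate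

theorem IsComplexStructure.directSum {J : p →ₗ[ℝ] p} {K : q →ₗ[ℝ] q}
    (hJ : IsComplexStructure J) (hK : IsComplexStructure K) (h : IsCompl p q) :
    IsComplexStructure (directSumEnd h J K) := by
  intro v
  obtain ⟨x, y, rfl, -⟩ := existsUnique_add_of_isCompl h v
  simp [directSumEnd_apply_add, hJ x, hK y, add_comm]

theorem CompatibleWith.directSum {J : p →ₗ[ℝ] p} {K : q →ₗ[ℝ] q}
    (hJ : CompatibleWith (ω.restrict p) J) (hK : CompatibleWith (ω.restrict q) K)
    (h : IsCompl p q) (hω : ω.IsRefl) (hq : q ≤ ω.orthogonal p) :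
    CompatibleWith ω (directSumEnd h J K) := by
  have ortho (x : p) (y : q) : ω x y = 0 := hq y.2 x x.2
  have ortho' (x : p) (y : q) : ω y x = 0 := hω x y (ortho x y)
  constructor
  · intro v hv
    obtain ⟨x, y, rfl, -⟩ := existsUnique_add_of_isCompl h v
    have taming_add : ω (x + y) (directSumEnd h J K (x + y)) = ω x (J x) + ω y (K y) := by
      simp [directSumEnd_apply_add, ortho, ortho']
    rw [taming_add]
    by_cases hx : x = 0
    · have hy : y ≠ 0 := by
        rintro rfl
        simp [hx] at hv
      simpa [hx] using hK.1 y hy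
    · by_cases hy : y = 0
      · simpa [hy] using hJ.1 x hx
      · exact add_pos (hJ.1 x hx) (hK.1 y hy)
  · intro u v
    obtain ⟨x, y, rfl, -⟩ := existsUnique_add_of_isCompl h u
    obtain ⟨x', y', rfl, -⟩ := existsUnique_add_of_isCompl h v
    have hxx' : ω (J x) (J x') = ω x x' := hJ.2 x x'
    have hyy' : ω (K y) (K y') = ω y y' := hK.2 y y'
    simp [directSumEnd_apply_add, ortho, ortho', hxx', hyy']

theorem isComplexStructure_quarterTurn (b : Basis (Fin 2) ℝ V) :
    IsComplexStructure (quarterTurn b) := by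
  suffices h : quarterTurn b ∘ₗ quarterTurn b = -LinearMap.id from LinearMap.congr_fun h
  refine b.ext fun i => ?_
  fin_cases i <;> simp

theorem compatibleWith_quarterTurn (hω : ω.IsAlt) {b : Basis (Fin 2) ℝ V}
    (hb : 0 < ω (b 0) (b 1)) : CompatibleWith ω (quarterTurn b) := by
  constructor
  · intro v hv
    obtain ⟨x, y, rfl⟩ : ∃ x y : ℝ, x • b 0 + y • b 1 = v :=
      ⟨b.repr v 0, b.repr v 1, by rw [← Fin.sum_univ_two fun i => b.repr v i • b i, b.sum_repr]⟩
    have hxy : x ≠ 0 ∨ y ≠ 0 := by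
      by_contra! h
      simp [h] at hv
    calc 0 < (x ^ 2 + y ^ 2) * ω (b 0) (b 1) := by obtain hx | hy := hxy <;> positivity
      _ = ω (x • b 0 + y • b 1) (quarterTurn b (x • b 0 + y • b 1)) := by
        simp only [map_add, map_smul, quarterTurn_apply_zero, quarterTurn_apply_one, map_neg,
          LinearMap.add_apply, LinearMap.smul_apply, smul_eq_mul, hω.self_eq_zero,
          ← hω.neg_eq (b 0) (b 1)]
        ring
  · suffices h : ω.comp (quarterTurn b) (quarterTurn b) = ω from LinearMap.congr_fun₂ h
    refine BilinForm.ext_basis b fun i j => ?_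
    fin_cases i <;> fin_cases j <;> simp [hω.self_eq_zero, hω.neg_eq]

theorem exists_submodule_compatible_apply_eq {v w : V} (hω : ω.IsAlt) (hvw : 0 < ω v w) :
    ∃ (p : Submodule ℝ V) (J : p →ₗ[ℝ] p), IsComplexStructure J ∧
      CompatibleWith (ω.restrict p) J ∧ ∃ hv : v ∈ p, J ⟨v, hv⟩ = w := by
  let b := Basis.span (linearIndependent_pair_of_apply_ne_zero hω hvw.ne')
  have hv : v ∈ span ℝ (Set.range ![v, w]) := subset_span ⟨0, rfl⟩
  have hb₀ : b 0 = ⟨v, hv⟩ := Basis.span_apply _ 0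
  have hb₁ : (b 1 : V) = w := congrArg Subtype.val (Basis.span_apply _ 1)
  have hb : 0 < ω (b 0) (b 1) := by rwa [hb₀, hb₁]
  exact ⟨_, quarterTurn b, isComplexStructure_quarterTurn b,
    compatibleWith_quarterTurn (isAlt_restrict hω _) hb, hv,
    by rw [← hb₀, quarterTurn_apply_zero, hb₁]⟩

theorem IsSymplecticForm.exists_compatible_apply_eq_of_forall_lt_top [FiniteDimensional ℝ V]
    (hω : IsSymplecticForm ω)
    (h_proper : ∀ q : Submodule ℝ V, q < ⊤ → IsSymplecticForm (ω.restrict q) →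
      ∃ K : q →ₗ[ℝ] q, IsComplexStructure K ∧ CompatibleWith (ω.restrict q) K)
    {v w : V} (hvw : 0 < ω v w) :
    ∃ J : V →ₗ[ℝ] V, IsComplexStructure J ∧ CompatibleWith ω J ∧ J v = w := by
  obtain ⟨p, T, hT, hTω, hv, rfl⟩ := exists_submodule_compatible_apply_eq hω.isAlt hvw
  have hp : IsCompl p (ω.orthogonal p) := isCompl_orthogonal_of_tames hω.isAlt hTω.1
  have hlt : ω.orthogonal p < ⊤ := by
    refine lt_top_iff_ne_top.mpr fun htop => hvw.ne' ?_
    have hTv : (T ⟨v, hv⟩ : V) ∈ ω.orthogonal p := by simp only [htop, mem_top]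
    exact hTv v hv
  obtain ⟨K, hK, hKω⟩ := h_proper _ hlt (hω.restrict_orthogonal hp.codisjoint)
  exact ⟨directSumEnd hp T K, hT.directSum hK hp, hTω.directSum hKω hp hω.isAlt.isRefl le_rfl,
    directSumEnd_apply_left hp T K ⟨v, hv⟩⟩

end Symplectic

theorem IsSymplecticForm.exists_compatible {V : Type*} [AddCommGroup V] [Module ℝ V]
    [FiniteDimensional ℝ V] {ω : BilinForm ℝ V} (hω : IsSymplecticForm ω) :
    ∃ J : V →ₗ[ℝ] V, IsComplexStructure J ∧ CompatibleWith ω J := by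
  obtain _ | _ := subsingleton_or_nontrivial V
  · exact ⟨0, fun _ => Subsingleton.elim _ _, fun v hv => (hv (Subsingleton.elim v 0)).elim,
      fun u _ => by simp [Subsingleton.elim u 0]⟩
  · obtain ⟨v, hv⟩ := exists_ne (0 : V)
    obtain ⟨w, hvw⟩ := exists_pos_of_linearMap_ne_zero (hω.apply_ne_zero hv)
    obtain ⟨J, hJ, hJω, -⟩ := hω.exists_compatible_apply_eq_of_forall_lt_top
      (fun q hq hqω => have := finrank_lt hq.ne; hqω.exists_compatible) hvw
    exact ⟨J, hJ, hJω⟩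
termination_by finrank ℝ V

theorem IsSymplecticForm.exists_compatible_apply_eq {V : Type*} [AddCommGroup V] [Module ℝ V]
    [FiniteDimensional ℝ V] {ω : BilinForm ℝ V} (hω : IsSymplecticForm ω) {v w : V}
    (hvw : 0 < ω v w) :
    ∃ J : V →ₗ[ℝ] V, IsComplexStructure J ∧ CompatibleWith ω J ∧ J v = w :=
  hω.exists_compatible_apply_eq_of_forall_lt_top (fun _ _ hqω => hqω.exists_compatible) hvw

theorem positivity_is_common_for_taming_forms_general
    {V : Type*} [AddCommGroup V] [Module ℝ V] [FiniteDimensional ℝ V]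
    {ω₁ ω₂ : V →ₗ[ℝ] V →ₗ[ℝ] ℝ} (h₁ : IsSymplecticForm ω₁)
    (h : ∀ J : V →ₗ[ℝ] V, IsComplexStructure J → CompatibleWith ω₁ J → Tames ω₂ J) (v w : V) :
    0 < ω₁ v w ↔ 0 < ω₂ v w := by
  obtain rfl | hv := eq_or_ne v 0
  · simp
  · refine pos_iff_pos_of_forall_pos_imp_pos (h₁.apply_ne_zero hv) (fun x hx => ?_) w
    obtain ⟨J, hJ, hJω, rfl⟩ := h₁.exists_compatible_apply_eq hx
    exact h J hJ hJω v hv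

theorem positivity_is_common_for_taming_forms
    {V : Type*} [AddCommGroup V] [Module ℝ V] [FiniteDimensional ℝ V]
    (hdim : 4 ≤ Module.finrank ℝ V)
    (ω₁ ω₂ : V →ₗ[ℝ] V →ₗ[ℝ] ℝ)
    (h₁ : IsSymplecticForm ω₁) (h₂ : IsSymplecticForm ω₂)
    (h : ∀ J : V →ₗ[ℝ] V, IsComplexStructure J → CompatibleWith ω₁ J → Tames ω₂ J)
    (v w : V) (hvw : LinearIndependent ℝ ![v, w]) :
    0 < ω₁ v w ↔ 0 < ω₂ v w := by
  exact positivity_is_common_for_taming_forms_general h₁ h v w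
end

section
/- Let V be a finite-dimensional real vector space, ω a linear symplectic form on V, and v, u ∈ V vectors with ω(v, u) > 0. Then there exists a complex structure J on V that is compatible with ω and satisfies J v = u (and consequently J u = −v). -/
/-! For `ω v u > 0` the space is the direct sum of the plane spanned by `v` and `u` and of its
`ω`-orthogonal complement `Q`. On the plane, `v ↦ u ↦ -v` is compatible with `ω`, because
`ω (a v + b u) (a u - b v) = (a² + b²) ω v u`. On `Q`, which has smaller dimension, `ω` is again
symplectic, so by induction `Q` carries some compatible complex structure; the direct sum of the
two is the required one. No square roots are extracted, so any ordered field will do. -/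

open Module Submodule
open LinearMap (BilinForm)

/-- `J` is a complex structure compatible with the bilinear form `ω`, over any ordered ring of
scalars; for real scalars this is `IsComplexStructure J ∧ CompatibleWith ω J`. -/
structure IsCompatibleComplexStructure {R M : Type*} [CommRing R] [PartialOrder R]
    [AddCommGroup M] [Module R M] (ω : BilinForm R M) (J : End R M) : Prop where
  apply_apply (x : M) : J (J x) = -x
  pos {x : M} : x ≠ 0 → 0 < ω x (J x)
  map_map (x y : M) : ω (J x) (J y) = ω x y

section CommRing

variable {R M : Type*} [CommRing R] [AddCommGroup M] [Module R M] {ω : BilinForm R M}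

lemma nondegenerate_restrict_of_codisjoint_of_le_orthogonal {p q : Submodule R M}
    (hω : ω.IsRefl) (hnd : ω.Nondegenerate) (hpq : Codisjoint p q) (hq : q ≤ ω.orthogonal p) :
    (ω.restrict q).Nondegenerate := by
  have hrefl : (ω.restrict q).IsRefl := fun x y => hω x y
  refine hrefl.nondegenerate_iff_separatingLeft.2 (LinearMap.separatingLeft_iff_ker_eq_bot.2 ?_)
  rw [BilinForm.ker_restrict_eq_of_codisjoint hpq.symm fun x hx y hy => hω y x (hq hx y hy),
    hnd.ker_eq_bot, comap_bot, ker_subtype]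

lemma mem_orthogonal_span_pair {v u x : M} :
    x ∈ ω.orthogonal (span R {v, u}) ↔ ω v x = 0 ∧ ω u x = 0 := by
  refine ⟨fun h => ⟨h v (mem_span_of_mem (by simp)), h u (mem_span_of_mem (by simp))⟩,
    fun ⟨hv, hu⟩ y hy => ?_⟩
  obtain ⟨a, b, rfl⟩ := mem_span_pair.1 hy
  simp [hv, hu]

lemma apply_smul_add_smul (hω : ω.IsAlt) (v u : M) (a b c d : R) :
    ω (a • v + b • u) (c • v + d • u) = (a * d - b * c) * ω v u := by
  simp only [map_add, map_smul, LinearMap.add_apply, LinearMap.smul_apply, smul_eq_mul,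
    hω.self_eq_zero, ← hω.neg_eq v u]
  ring

namespace IsCompatibleComplexStructure

variable [PartialOrder R]

lemma apply_self_nonneg {J : End R M} (hJ : IsCompatibleComplexStructure ω J) (x : M) :
    0 ≤ ω x (J x) := by
  rcases eq_or_ne x 0 with rfl | hx
  · simp
  · exact (hJ.pos hx).le

lemma ofIsCompl [IsOrderedAddMonoid R] {p q : Submodule R M} {J : End R p} {J' : End R q}
    (hJ : IsCompatibleComplexStructure (ω.restrict p) J)
    (hJ' : IsCompatibleComplexStructure (ω.restrict q) J')
    (hω : ω.IsRefl) (hpq : IsCompl p q) (hq : q ≤ ω.orthogonal p) :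
    IsCompatibleComplexStructure ω
      (LinearMap.ofIsCompl hpq (p.subtype ∘ₗ J) (q.subtype ∘ₗ J')) := by
  set I := LinearMap.ofIsCompl hpq (p.subtype ∘ₗ J) (q.subtype ∘ₗ J') with hI_def
  have hI (y : p) (z : q) : I (y + z) = J y + J' z := by simp [hI_def]
  have hadd (y y' : p) (z z' : q) :
      ω (y + z) (y' + z') = ω.restrict p y y' + ω.restrict q z z' := by
    have hyz : ω y z' = 0 := hq z'.2 y y.2
    have hzy : ω z y' = 0 := hω _ _ (hq z.2 y' y'.2)
    simp [hyz, hzy]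
  have hdecomp (x : M) : ∃ (y : p) (z : q), (y + z : M) = x := by
    obtain ⟨y, z, hy, hz, rfl⟩ := codisjoint_iff_exists_add_eq.1 hpq.codisjoint x
    exact ⟨⟨y, hy⟩, ⟨z, hz⟩, rfl⟩
  refine ⟨fun x => ?_, fun {x} hx => ?_, fun x x' => ?_⟩
  · obtain ⟨y, z, rfl⟩ := hdecomp x
    rw [hI, hI, hJ.apply_apply, hJ'.apply_apply, Submodule.coe_neg, Submodule.coe_neg, neg_add]
  · obtain ⟨y, z, rfl⟩ := hdecomp x
    rw [hI, hadd]
    rcases eq_or_ne y 0 with rfl | hy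
    · exact add_pos_of_nonneg_of_pos (hJ.apply_self_nonneg _)
        (hJ'.pos fun hz => hx (by simp [hz]))
    · exact add_pos_of_pos_of_nonneg (hJ.pos hy) (hJ'.apply_self_nonneg _)
  · obtain ⟨y, z, rfl⟩ := hdecomp x
    obtain ⟨y', z', rfl⟩ := hdecomp x'
    rw [hI, hI, hadd, hadd, hJ.map_map, hJ'.map_map]

end IsCompatibleComplexStructure

end CommRing

section Field

variable {K V : Type*} [Field K] [AddCommGroup V] [Module K V] {ω : BilinForm K V} {v u : V}

lemma isCompl_span_pair_orthogonal (hω : ω.IsAlt) (hvu : ω v u ≠ 0) :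
    IsCompl (span K {v, u}) (ω.orthogonal (span K {v, u})) := by
  refine ⟨disjoint_def.2 fun x hx hx' => ?_, codisjoint_iff_exists_add_eq.2 fun x => ?_⟩
  · obtain ⟨a, b, rfl⟩ := mem_span_pair.1 hx
    have huv : ω u v ≠ 0 := by rwa [← hω.neg_eq v u, neg_ne_zero]
    obtain ⟨hb, ha⟩ : b = 0 ∧ a = 0 := by
      simpa [hω.self_eq_zero, hvu, huv] using mem_orthogonal_span_pair.1 hx'
    simp [ha, hb]
  · let y := (ω x u / ω v u) • v + (ω v x / ω v u) • u
    refine ⟨y, x - y, mem_span_pair.2 ⟨_, _, rfl⟩, mem_orthogonal_span_pair.2 ⟨?_, ?_⟩,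
      add_sub_cancel _ _⟩
    · simp [y, hω.self_eq_zero, hvu]
    · simp [y, hω.self_eq_zero, ← hω.neg_eq v u, ← hω.neg_eq x u, hvu]

/-- The rotation `v ↦ u ↦ -v` of the plane spanned by `v` and `u`, extended by zero on the
`ω`-orthogonal complement of this plane. The form `ω` should be alternating with `ω v u ≠ 0`. -/
def planeRotation (ω : BilinForm K V) (v u : V) : End K V :=
  (ω v u)⁻¹ • ((ω.flip u).smulRight u - (ω v).smulRight v)

lemma planeRotation_apply_mem_span_pair (x : V) : planeRotation ω v u x ∈ span K {v, u} :=
  smul_mem _ _ <| sub_mem (smul_mem _ _ <| mem_span_of_mem <| by simp)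
    (smul_mem _ _ <| mem_span_of_mem <| by simp)

lemma planeRotation_apply_left (hω : ω.IsAlt) (hvu : ω v u ≠ 0) : planeRotation ω v u v = u := by
  simp [planeRotation, hω.self_eq_zero, hvu]

lemma planeRotation_apply_right (hω : ω.IsAlt) (hvu : ω v u ≠ 0) :
    planeRotation ω v u u = -v := by
  simp [planeRotation, hω.self_eq_zero, hvu]

lemma planeRotation_smul_add_smul (hω : ω.IsAlt) (hvu : ω v u ≠ 0) (a b : K) :
    planeRotation ω v u (a • v + b • u) = (-b) • v + a • u := by
  simp only [map_add, map_smul, planeRotation_apply_left hω hvu,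
    planeRotation_apply_right hω hvu]
  module

end Field

section OrderedField

variable {K V : Type*} [Field K] [LinearOrder K] [IsStrictOrderedRing K] [AddCommGroup V]
  [Module K V] {ω : BilinForm K V} {v u : V}

lemma isCompatibleComplexStructure_restrict_planeRotation (hω : ω.IsAlt) (hvu : 0 < ω v u) :
    IsCompatibleComplexStructure (ω.restrict (span K {v, u}))
      ((planeRotation ω v u).restrict fun x _ => planeRotation_apply_mem_span_pair x) := by
  have hrot := planeRotation_smul_add_smul hω hvu.ne'
  refine ⟨fun ⟨x, hx⟩ => Subtype.ext ?_, fun {x} hne => ?_, fun ⟨x, hx⟩ ⟨y, hy⟩ => ?_⟩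
  · obtain ⟨a, b, rfl⟩ := mem_span_pair.1 hx
    change planeRotation ω v u (planeRotation ω v u (a • v + b • u)) = -(a • v + b • u)
    rw [hrot, hrot]
    module
  · obtain ⟨x, hx⟩ := x
    obtain ⟨a, b, rfl⟩ := mem_span_pair.1 hx
    have hab : a ≠ 0 ∨ b ≠ 0 := by
      by_contra! h
      exact hne (by simp [h.1, h.2])
    have hsq : 0 < a * a + b * b := by
      rcases hab with ha | hb
      · exact add_pos_of_pos_of_nonneg (mul_self_pos.2 ha) (mul_self_nonneg b)
      · exact add_pos_of_nonneg_of_pos (mul_self_nonneg a) (mul_self_pos.2 hb)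
    calc
      0 < (a * a + b * b) * ω v u := mul_pos hsq hvu
      _ = ω (a • v + b • u) (planeRotation ω v u (a • v + b • u)) := by
        rw [hrot, apply_smul_add_smul hω]
        ring
  · obtain ⟨a, b, rfl⟩ := mem_span_pair.1 hx
    obtain ⟨c, d, rfl⟩ := mem_span_pair.1 hy
    change ω (planeRotation ω v u (a • v + b • u)) (planeRotation ω v u (c • v + d • u)) =
      ω (a • v + b • u) (c • v + d • u)
    rw [hrot, hrot, apply_smul_add_smul hω, apply_smul_add_smul hω]
    ring

lemma exists_isCompatibleComplexStructure_of_orthogonal_span_pair (hω : ω.IsAlt)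
    (hvu : 0 < ω v u)
    (h : ∃ J, IsCompatibleComplexStructure (ω.restrict (ω.orthogonal (span K {v, u}))) J) :
    ∃ J, IsCompatibleComplexStructure ω J ∧ J v = u ∧ J u = -v := by
  obtain ⟨J, hJ⟩ := h
  have hcompl := isCompl_span_pair_orthogonal hω hvu.ne'
  let v' : span K {v, u} := ⟨v, mem_span_of_mem (by simp)⟩
  let u' : span K {v, u} := ⟨u, mem_span_of_mem (by simp)⟩
  refine ⟨_, (isCompatibleComplexStructure_restrict_planeRotation hω hvu).ofIsCompl hJ
    hω.isRefl hcompl le_rfl, ?_, ?_⟩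
  · exact (LinearMap.ofIsCompl_apply_left hcompl v').trans (planeRotation_apply_left hω hvu.ne')
  · exact (LinearMap.ofIsCompl_apply_left hcompl u').trans (planeRotation_apply_right hω hvu.ne')

lemma exists_isCompatibleComplexStructure [FiniteDimensional K V] (hω : ω.IsAlt)
    (hnd : ω.Nondegenerate) : ∃ J, IsCompatibleComplexStructure ω J := by
  induction hn : finrank K V using Nat.strong_induction_on generalizing V with
  | _ n ih =>
    rcases subsingleton_or_nontrivial V with _ | _
    · exact ⟨0, fun _ => Subsingleton.elim _ _, fun hx => (hx (Subsingleton.elim _ _)).elim,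
        fun x y => by simp [Subsingleton.elim x 0]⟩
    obtain ⟨v, hv⟩ := exists_ne (0 : V)
    obtain ⟨w, hw⟩ : ∃ w, ω v w ≠ 0 := by
      by_contra! h
      exact hv (hnd.1 v h)
    have hpos : 0 < ω v (ω v w • w) := by simpa using mul_self_pos.2 hw
    have hcompl := isCompl_span_pair_orthogonal hω hpos.ne'
    set Q := ω.orthogonal (span K {v, ω v w • w})
    have hQ : finrank K Q < n := by
      rw [← hn]
      refine finrank_lt fun htop => hv ?_
      exact disjoint_def.1 hcompl.disjoint v (mem_span_of_mem (by simp)) (htop ▸ mem_top)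
    obtain ⟨J, hJ, -⟩ := exists_isCompatibleComplexStructure_of_orthogonal_span_pair hω hpos <|
      ih _ hQ (fun x => hω x) (nondegenerate_restrict_of_codisjoint_of_le_orthogonal hω.isRefl hnd
        hcompl.codisjoint le_rfl) rfl
    exact ⟨J, hJ⟩

theorem exists_compatible_complex_structure_mapping_general [FiniteDimensional K V]
    (hω : ω.IsAlt) (hnd : ω.Nondegenerate) (hvu : 0 < ω v u) :
    ∃ J, IsCompatibleComplexStructure ω J ∧ J v = u ∧ J u = -v :=
  exists_isCompatibleComplexStructure_of_orthogonal_span_pair hω hvu <|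
    exists_isCompatibleComplexStructure (fun x => hω x) <|
      nondegenerate_restrict_of_codisjoint_of_le_orthogonal hω.isRefl hnd
        (isCompl_span_pair_orthogonal hω hvu.ne').codisjoint le_rfl

end OrderedField

lemma IsSymplecticForm.nondegenerate_s4 {V : Type*} [AddCommGroup V] [Module ℝ V]
    {ω : BilinForm ℝ V} (hω : IsSymplecticForm ω) : ω.Nondegenerate := by
  have halt : ω.IsAlt := hω.1
  refine halt.isRefl.nondegenerate_iff_separatingLeft.2 fun x hx => ?_
  by_contra hne
  obtain ⟨w, hw⟩ := hω.2 x hne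
  exact hw (hx w)

theorem exists_compatible_complex_structure_mapping
    {V : Type*} [AddCommGroup V] [Module ℝ V] [FiniteDimensional ℝ V]
    (ω : V →ₗ[ℝ] V →ₗ[ℝ] ℝ) (hω : IsSymplecticForm ω)
    (v u : V) (hvu : 0 < ω v u) :
    ∃ J : V →ₗ[ℝ] V, IsComplexStructure J ∧ CompatibleWith ω J ∧
      J v = u ∧ J u = -v := by
  obtain ⟨J, hJ, hJv, hJu⟩ :=
    exists_compatible_complex_structure_mapping_general hω.1 hω.nondegenerate_s4 hvu
  exact ⟨J, hJ.apply_apply, ⟨fun _ => hJ.pos, hJ.map_map⟩, hJv, hJu⟩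
end
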